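/- arXiv:2509.21199 — 2 statements merged into one kernel-verified Lean document; each statement's English description precedes it below -/
import Mathlib

section
/- (Fano-style accuracy upper bound for single-pass reasoning.) Let A, Y, W be random variables on a finite probability space with values in finite sets, with A taking values in a finite set 𝒜 with |𝒜| ≥ 2. Let g be a function from the value set of Y into 𝒜, set P_e = P(g(Y) ≠ A) and Acc = 1 − P_e, and define the information demand β = H(A | W) and the output capacity C = H(Y | W). Then h(Acc) + (1 − Acc) · log₂(|𝒜| − 1) ≥ β − C. -/
open scoped Classical
open Finset

namespace InfoQA

variable {Ω : Type*} [Fintype Ω]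

/-- Probability of an event under a pmf `p` on a finite sample space. -/
noncomputable def pr (p : Ω → ℝ) (S : Ω → Prop) : ℝ :=
  ∑ ω, if S ω then p ω else 0

/-- Distribution of a random variable `X` under `p`. -/
noncomputable def distOf (p : Ω → ℝ) {α : Type*} (X : Ω → α) (a : α) : ℝ :=
  pr p (fun ω => X ω = a)

/-- Shannon entropy of a random variable (logarithm base 2). -/
noncomputable def H (p : Ω → ℝ) {α : Type*} [Fintype α] (X : Ω → α) : ℝ :=
  -∑ a, distOf p X a * Real.logb 2 (distOf p X a)

/-- Conditional entropy `H(X | Z) = H(X, Z) - H(Z)` (base 2). -/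
noncomputable def condH (p : Ω → ℝ) {α β : Type*} [Fintype α] [Fintype β]
    (X : Ω → α) (Z : Ω → β) : ℝ :=
  H p (fun ω => (X ω, Z ω)) - H p Z

/-- Conditional mutual information `I(X ; Y | Z) = H(X | Z) - H(X | (Y, Z))` (base 2). -/
noncomputable def condMI (p : Ω → ℝ) {α β γ : Type*} [Fintype α] [Fintype β] [Fintype γ]
    (X : Ω → α) (Y : Ω → β) (Z : Ω → γ) : ℝ :=
  condH p X Z - condH p X (fun ω => (Y ω, Z ω))

/-- Binary entropy function (base 2); `Real.logb 2 0 = 0`, so `binEnt 0 = binEnt 1 = 0`. -/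
noncomputable def binEnt (x : ℝ) : ℝ :=
  -(x * Real.logb 2 x) - (1 - x) * Real.logb 2 (1 - x)

end InfoQA

namespace InfoQA

variable {Ω : Type*} [Fintype Ω]

theorem sum_distOf_mul (p : Ω → ℝ) {α : Type*} [Fintype α] (X : Ω → α) (f : α → ℝ) :
    ∑ a, distOf p X a * f a = ∑ ω, p ω * f (X ω) := by
  simp only [distOf, pr, Finset.sum_mul]
  rw [Finset.sum_comm]
  simp [ite_mul]

theorem H_eq_neg_sum (p : Ω → ℝ) {α : Type*} [Fintype α] (X : Ω → α) :
    H p X = -∑ ω, p ω * Real.logb 2 (distOf p X (X ω)) := by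
  rw [H, sum_distOf_mul p X (fun a => Real.logb 2 (distOf p X a))]

theorem pr_nonneg {p : Ω → ℝ} (hp : ∀ ω, 0 ≤ p ω) (S : Ω → Prop) : 0 ≤ pr p S :=
  Finset.sum_nonneg fun ω _ => by split_ifs <;> simp [hp ω]

theorem pr_mono {p : Ω → ℝ} (hp : ∀ ω, 0 ≤ p ω) {S T : Ω → Prop} (h : ∀ ω, S ω → T ω) :
    pr p S ≤ pr p T :=
  Finset.sum_le_sum fun ω _ => by
    by_cases hS : S ω
    · simp [hS, h ω hS]
    · rw [if_neg hS]
      split_ifs <;> simp [hp ω]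

theorem le_pr {p : Ω → ℝ} (hp : ∀ ω, 0 ≤ p ω) {S : Ω → Prop} {ω : Ω} (h : S ω) :
    p ω ≤ pr p S := by
  have := Finset.single_le_sum (f := fun ω => if S ω then p ω else 0)
    (fun ω _ => by split_ifs <;> simp [hp ω]) (Finset.mem_univ ω)
  simpa [pr, h] using this

theorem pr_not_add_pr (p : Ω → ℝ) (S : Ω → Prop) :
    pr p (fun ω => ¬ S ω) + pr p S = ∑ ω, p ω := by
  rw [pr, pr, ← Finset.sum_add_distrib]
  exact Finset.sum_congr rfl fun ω _ => by by_cases h : S ω <;> simp [h]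

/-- A function of a random variable has at most the entropy of that variable. -/
theorem H_comp_le {p : Ω → ℝ} (hp : ∀ ω, 0 ≤ p ω) {α β : Type*} [Fintype α] [Fintype β]
    (X : Ω → α) (f : α → β) : H p (fun ω => f (X ω)) ≤ H p X := by
  rw [H_eq_neg_sum, H_eq_neg_sum, neg_le_neg_iff]
  refine Finset.sum_le_sum fun ω _ => ?_
  rcases (hp ω).eq_or_lt with h | h
  · simp [← h]
  · exact mul_le_mul_of_nonneg_left
      (Real.logb_le_logb_of_le one_lt_two (h.trans_le (le_pr hp rfl))
        (pr_mono hp fun _ hX => congrArg f hX)) h.le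

/-- Gibbs inequality, in the form of the cross-entropy bound. -/
theorem H_le_cross_entropy {p : Ω → ℝ} (hp : ∀ ω, 0 ≤ p ω) (hsum : ∑ ω, p ω = 1)
    {α : Type*} [Fintype α] (X : Ω → α) (q : α → ℝ) (hq : ∀ a, 0 ≤ q a)
    (hq_sum : ∑ a, q a ≤ 1) (hq_pos : ∀ ω, 0 < p ω → 0 < q (X ω)) :
    H p X ≤ -∑ ω, p ω * Real.logb 2 (q (X ω)) := by
  have hlog : (0 : ℝ) < Real.log 2 := Real.log_pos one_lt_two
  have hdist : ∑ a, distOf p X a = 1 := by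
    simpa [hsum] using sum_distOf_mul p X (fun _ => 1)
  rw [← sum_distOf_mul p X (fun a => Real.logb 2 (q a)), H, neg_le_neg_iff, ← sub_nonpos,
    ← Finset.sum_sub_distrib]
  have hterm : ∀ a, distOf p X a * Real.logb 2 (q a) - distOf p X a * Real.logb 2 (distOf p X a)
      ≤ (q a - distOf p X a) / Real.log 2 := by
    intro a
    have hd : 0 ≤ distOf p X a := pr_nonneg hp _
    rcases hd.eq_or_lt with h | h
    · simpa [← h] using div_nonneg (hq a) hlog.le
    · have hqa : 0 < q a := by
        obtain ⟨ω, -, hω⟩ := Finset.exists_ne_zero_of_sum_ne_zero h.ne'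
        obtain ⟨rfl, hne⟩ := ite_ne_right_iff.mp hω
        exact hq_pos ω ((hp ω).lt_of_ne' hne)
      have key := mul_le_mul_of_nonneg_left
        (Real.log_le_sub_one_of_pos (div_pos hqa h)) h.le
      rw [Real.log_div hqa.ne' h.ne', mul_sub, mul_sub, mul_div_cancel₀ _ h.ne', mul_one] at key
      calc _ = (distOf p X a * Real.log (q a) - distOf p X a * Real.log (distOf p X a))
            / Real.log 2 := by simp only [Real.logb]; ring
        _ ≤ _ := by gcongr
  refine (Finset.sum_le_sum fun a _ => hterm a).trans ?_
  rw [← Finset.sum_div, Finset.sum_sub_distrib, hdist]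
  exact div_nonpos_of_nonpos_of_nonneg (by linarith) hlog.le

/-- Fano's inequality for an estimate `g Z` of `A` from `Z`. -/
theorem condH_le_fano {p : Ω → ℝ} (hp : ∀ ω, 0 ≤ p ω) (hsum : ∑ ω, p ω = 1)
    {α β : Type*} [Fintype α] [Fintype β] (hcard : 2 ≤ Fintype.card α)
    (A : Ω → α) (Z : Ω → β) (g : β → α) :
    condH p A Z ≤ binEnt (1 - pr p (fun ω => g (Z ω) ≠ A ω)) +
      pr p (fun ω => g (Z ω) ≠ A ω) * Real.logb 2 ((Fintype.card α : ℝ) - 1) := by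
  set e := pr p (fun ω => g (Z ω) ≠ A ω) with he
  set N : ℝ := (Fintype.card α : ℝ) - 1 with hN
  have hN_pos : 0 < N := by
    have : (2 : ℝ) ≤ Fintype.card α := by exact_mod_cast hcard
    linarith
  have hcorrect : pr p (fun ω => g (Z ω) = A ω) = 1 - e := by
    have := pr_not_add_pr p (fun ω => g (Z ω) = A ω)
    rw [hsum] at this
    exact eq_sub_of_add_eq' this
  have he_nonneg : 0 ≤ e := pr_nonneg hp _
  have hcorrect_nonneg : 0 ≤ 1 - e := hcorrect ▸ pr_nonneg hp _
  let k : α → β → ℝ := fun a z => if g z = a then 1 - e else e / N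
  have hk_nonneg : ∀ a z, 0 ≤ k a z := fun a z => by
    dsimp only [k]
    split_ifs
    · exact hcorrect_nonneg
    · positivity
  have hk_sum : ∀ z, ∑ a, k a z = 1 := fun z => by
    have hsplit : ∀ a, k a z = (if g z = a then 1 - e - e / N else 0) + e / N := fun a => by
      dsimp only [k]
      split_ifs <;> ring
    simp only [hsplit, Finset.sum_add_distrib, Finset.sum_ite_eq, Finset.mem_univ, if_true,
      Finset.sum_const, Finset.card_univ, nsmul_eq_mul]
    rw [show (Fintype.card α : ℝ) = N + 1 by rw [hN]; ring]
    field_simp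
    ring
  have hk_pos : ∀ ω, 0 < p ω → 0 < k (A ω) (Z ω) := fun ω hω => by
    dsimp only [k]
    split_ifs with h
    · exact hω.trans_le (hcorrect ▸ le_pr hp h)
    · exact div_pos (hω.trans_le (le_pr hp h)) hN_pos
  have hZ_pos : ∀ ω, 0 < p ω → 0 < distOf p Z (Z ω) := fun ω hω => hω.trans_le (le_pr hp rfl)
  have hgibbs := H_le_cross_entropy hp hsum (fun ω => (A ω, Z ω))
    (fun x => k x.1 x.2 * distOf p Z x.2)
    (fun x => mul_nonneg (hk_nonneg _ _) (pr_nonneg hp _))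
    (by
      rw [Fintype.sum_prod_type_right]
      simp only [← Finset.sum_mul, hk_sum, one_mul]
      simpa [hsum] using (sum_distOf_mul p Z (fun _ => 1)).le)
    (fun ω hω => mul_pos (hk_pos ω hω) (hZ_pos ω hω))
  have hlog_mul : ∑ ω, p ω * Real.logb 2 (k (A ω) (Z ω) * distOf p Z (Z ω)) =
      ∑ ω, p ω * Real.logb 2 (k (A ω) (Z ω)) + ∑ ω, p ω * Real.logb 2 (distOf p Z (Z ω)) := by
    rw [← Finset.sum_add_distrib]
    refine Finset.sum_congr rfl fun ω _ => ?_
    rcases (hp ω).eq_or_lt with h | h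
    · simp [← h]
    · rw [Real.logb_mul (hk_pos ω h).ne' (hZ_pos ω h).ne', mul_add]
  have hlog_k : ∑ ω, p ω * Real.logb 2 (k (A ω) (Z ω)) =
      (1 - e) * Real.logb 2 (1 - e) + e * Real.logb 2 (e / N) := by
    trans pr p (fun ω => g (Z ω) = A ω) * Real.logb 2 (1 - e) +
      pr p (fun ω => g (Z ω) ≠ A ω) * Real.logb 2 (e / N)
    swap
    · rw [hcorrect]
    rw [pr, pr, Finset.sum_mul, Finset.sum_mul, ← Finset.sum_add_distrib]
    refine Finset.sum_congr rfl fun ω _ => ?_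
    by_cases h : g (Z ω) = A ω <;> simp [k, h]
  have hlog_div : e * Real.logb 2 (e / N) = e * Real.logb 2 e - e * Real.logb 2 N := by
    rcases he_nonneg.eq_or_lt with h | h
    · simp [← h]
    · rw [Real.logb_div h.ne' hN_pos.ne', mul_sub]
  rw [hlog_mul, hlog_k, hlog_div] at hgibbs
  rw [condH, H_eq_neg_sum p Z, binEnt, sub_sub_cancel]
  linarith

end InfoQA

open InfoQA

/-- Fano-style accuracy upper bound for single-pass reasoning:
with `Acc = 1 − P_e`, `β = H(A | W)` and `C = H(Y | W)`,
`h(Acc) + (1 − Acc) · log₂(|𝒜| − 1) ≥ β − C`. -/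
theorem fano_accuracy_upper_bound
    {Ω 𝒜 𝒴 𝒲 : Type*} [Fintype Ω] [Fintype 𝒜] [Fintype 𝒴] [Fintype 𝒲]
    (p : Ω → ℝ) (hp : ∀ ω, 0 ≤ p ω) (hsum : ∑ ω, p ω = 1)
    (hcard : 2 ≤ Fintype.card 𝒜)
    (A : Ω → 𝒜) (Y : Ω → 𝒴) (W : Ω → 𝒲) (g : 𝒴 → 𝒜) :
    binEnt (1 - pr p (fun ω => g (Y ω) ≠ A ω)) +
        (1 - (1 - pr p (fun ω => g (Y ω) ≠ A ω))) * Real.logb 2 ((Fintype.card 𝒜 : ℝ) - 1) ≥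
      condH p A W - condH p Y W := by
  have hfano := condH_le_fano hp hsum hcard A (fun ω => (Y ω, W ω)) (fun z => g z.1)
  have hmono := H_comp_le hp (fun ω => (A ω, Y ω, W ω)) (fun x => (x.1, x.2.2))
  rw [sub_sub_cancel]
  simp only [condH] at hfano hmono ⊢
  linarith
end

section
/- Let A, Y, W be random variables on a finite probability space with values in finite sets, with A taking values in a finite set 𝒜 with |𝒜| ≥ 2, and let g be a function from the value set of Y into 𝒜. If the information demand exceeds the output capacity, i.e. H(A | W) > H(Y | W), then perfect accuracy is impossible: P(g(Y) ≠ A) > 0. -/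
open scoped Classical
open Finset

open InfoQA

namespace InfoQA

/-- An event containing an outcome of nonzero mass has positive probability. -/
lemma pr_pos {Ω : Type*} [Fintype Ω] {p : Ω → ℝ} (hp : ∀ ω, 0 ≤ p ω) {S : Ω → Prop} {ω : Ω}
    (hω : p ω ≠ 0) (hS : S ω) : 0 < pr p S := by
  refine Finset.sum_pos' (fun η _ => ?_) ⟨ω, Finset.mem_univ ω, ?_⟩
  · split_ifs <;> simp [hp]
  · simpa [hS] using lt_of_le_of_ne (hp ω) hω.symm

/-- Entropy is the expectation of the surprisal. -/
lemma H_eq_neg_sum_surprisal {Ω α : Type*} [Fintype Ω] [Fintype α] (p : Ω → ℝ) (X : Ω → α) :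
    H p X = -∑ ω, p ω * Real.logb 2 (distOf p X (X ω)) := by
  unfold H
  congr 1
  calc ∑ a, distOf p X a * Real.logb 2 (distOf p X a)
      = ∑ a, ∑ ω, if X ω = a then p ω * Real.logb 2 (distOf p X a) else 0 := by
        refine Finset.sum_congr rfl fun a _ => ?_
        conv_lhs => rw [distOf, pr, Finset.sum_mul]
        simp only [ite_mul, zero_mul, distOf, pr]
    _ = ∑ ω, p ω * Real.logb 2 (distOf p X (X ω)) := by
        rw [Finset.sum_comm]
        simp

/-- A random variable that is almost surely a function of another has at most its entropy. -/
lemma H_le_of_ae_eq_comp {Ω α β : Type*} [Fintype Ω] [Fintype α] [Fintype β]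
    {p : Ω → ℝ} (hp : ∀ ω, 0 ≤ p ω) {X : Ω → α} {Z : Ω → β} (f : α → β)
    (hf : ∀ ω, p ω ≠ 0 → Z ω = f (X ω)) : H p Z ≤ H p X := by
  rw [H_eq_neg_sum_surprisal, H_eq_neg_sum_surprisal]
  refine neg_le_neg (Finset.sum_le_sum fun ω _ => ?_)
  rcases eq_or_ne (p ω) 0 with h0 | h0
  · simp [h0]
  have hpos : 0 < distOf p X (X ω) := pr_pos hp h0 rfl
  have hle : distOf p X (X ω) ≤ distOf p Z (Z ω) := by
    refine Finset.sum_le_sum fun η _ => ?_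
    rcases eq_or_ne (p η) 0 with hη | hη
    · simp [hη]
    by_cases hX : X η = X ω
    · simp [hX, hf η hη, hf ω h0]
    · simp only [hX, if_false]
      split_ifs <;> simp [hp]
  exact mul_le_mul_of_nonneg_left (Real.logb_le_logb_of_le one_lt_two hpos hle) (hp ω)

end InfoQA

/-- If the information demand exceeds the output capacity, perfect accuracy is
impossible: `H(A | W) > H(Y | W)` implies `P(g(Y) ≠ A) > 0`. -/
theorem demand_gt_capacity_implies_error
    {Ω 𝒜 𝒴 𝒲 : Type*} [Fintype Ω] [Fintype 𝒜] [Fintype 𝒴] [Fintype 𝒲]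
    (p : Ω → ℝ) (hp : ∀ ω, 0 ≤ p ω) (hsum : ∑ ω, p ω = 1)
    (hcard : 2 ≤ Fintype.card 𝒜)
    (A : Ω → 𝒜) (Y : Ω → 𝒴) (W : Ω → 𝒲) (g : 𝒴 → 𝒜)
    (hgt : condH p A W > condH p Y W) :
    0 < pr p (fun ω => g (Y ω) ≠ A ω) := by
  by_contra hpr
  have hA : ∀ ω, p ω ≠ 0 → A ω = g (Y ω) := fun ω hω => by
    by_contra hne
    exact hpr (pr_pos hp hω (Ne.symm hne))
  have hle : H p (fun ω => (A ω, W ω)) ≤ H p (fun ω => (Y ω, W ω)) :=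
    H_le_of_ae_eq_comp hp (fun q => (g q.1, q.2)) fun ω hω => by simp [hA ω hω]
  unfold condH at hgt
  linarith
end
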